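/- For λ = 1/2, any n ≥ 1, any index m ∈ {1,…,n}, and all ψ ∈ A, one has C^{1/2}_2(ψ, ξ_m) = −(1/16)·(E'(E'+1))^{−1}(ξ_m · D²ψ) + (1/8)·(E'+1)^{−1}(∂(Dψ)/∂u_m); here E'(E'+1) and E'+1 are invertible on A since they act on A^k by the nonzero scalars (k + n/2)(k + n/2 + 1) and k + n/2 + 1, respectively. -/

import Mathlib

open MvPolynomial

/-- The polynomial symbol algebra `A = ℂ[u₁,…,uₙ,ξ₁,…,ξₙ]`: variables `Sum.inl i` are the
`uᵢ` and variables `Sum.inr i` are the `ξᵢ`. -/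
abbrev PolA (n : ℕ) := MvPolynomial (Fin n ⊕ Fin n) ℂ

namespace LO

/-- ξ-degree of a monomial exponent. -/
def xiDeg {n : ℕ} (d : (Fin n ⊕ Fin n) →₀ ℕ) : ℕ :=
  ∑ i : Fin n, d (Sum.inr i)

/-- `c(E)`: the operator multiplying the ξ-degree-`m` component by `c m`. -/
noncomputable def cE {n : ℕ} (c : ℕ → ℂ) (φ : PolA n) : PolA n :=
  ∑ d ∈ φ.support, monomial d (c (xiDeg d) * coeff d φ)

/-- `D = Σᵢ ∂²/∂uᵢ∂ξᵢ`. -/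
noncomputable def Dop {n : ℕ} (φ : PolA n) : PolA n :=
  ∑ i : Fin n, pderiv (Sum.inl i) (pderiv (Sum.inr i) φ)

/-- The scalar `h^λ_d(m)`. -/
noncomputable def hScal (n : ℕ) (lam : ℂ) (d m : ℕ) : ℂ :=
  (d.factorial : ℂ)⁻¹ *
    ∏ j ∈ Finset.range d,
      ((m : ℂ) + (j : ℂ) + lam * ((n : ℂ) + 1)) /
        (2 * (m : ℂ) + (j : ℂ) + (n : ℂ) + (d : ℂ))

/-- The scalar `g^λ_d(m)`. -/
noncomputable def gScal (n : ℕ) (lam : ℂ) (d m : ℕ) : ℂ :=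
  (d.factorial : ℂ)⁻¹ *
    ∏ j ∈ Finset.range d,
      (-(m : ℂ) - (j : ℂ) - lam * ((n : ℂ) + 1)) /
        (2 * (m : ℂ) + (j : ℂ) + (n : ℂ) + 1)

/-- `bh^λ_d = h^λ_d(E) ∘ D^d` (equal to the identity for `d = 0`). -/
noncomputable def bh {n : ℕ} (lam : ℂ) (d : ℕ) (φ : PolA n) : PolA n :=
  cE (hScal n lam d) (Dop^[d] φ)

/-- `bg^λ_d = g^λ_d(E) ∘ D^d` (equal to the identity for `d = 0`). -/
noncomputable def bg {n : ℕ} (lam : ℂ) (d : ℕ) (φ : PolA n) : PolA n :=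
  cE (gScal n lam d) (Dop^[d] φ)

/-- `N_k(φ,ψ) = (1/k!) Σ_{α ∈ {1,…,n}^k} ∂^kφ/∂ξ_α · ∂^kψ/∂u_α`. -/
noncomputable def Nop {n : ℕ} (k : ℕ) (φ ψ : PolA n) : PolA n :=
  (k.factorial : ℂ)⁻¹ •
    ∑ α : Fin k → Fin n,
      ((List.ofFn α).foldr (fun i acc => pderiv (Sum.inr i) acc) φ) *
      ((List.ofFn α).foldr (fun i acc => pderiv (Sum.inl i) acc) ψ)

/-- The coefficient `C^λ_p` of the Lecomte–Ovsienko star product. -/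
noncomputable def C (n : ℕ) (lam : ℂ) (p : ℕ) (φ ψ : PolA n) : PolA n :=
  ∑ i ∈ Finset.range (p + 1), ∑ j ∈ Finset.range (p + 1),
    ∑ k ∈ Finset.range (p + 1), ∑ m ∈ Finset.range (p + 1),
      if i + j + k + m = p then bg lam m (Nop k (bh lam i φ) (bh lam j ψ)) else 0

/-- The Poisson bracket `{φ,ψ}`. -/
noncomputable def pb {n : ℕ} (φ ψ : PolA n) : PolA n :=
  ∑ i : Fin n,
    (pderiv (Sum.inr i) φ * pderiv (Sum.inl i) ψ
      - pderiv (Sum.inl i) φ * pderiv (Sum.inr i) ψ)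

/-- `φ ∈ A^m` (ξ-homogeneous of degree `m`; for `m < 0` this forces `φ = 0`). -/
def IsXiHomog {n : ℕ} (m : ℤ) (φ : PolA n) : Prop :=
  ∀ d ∈ φ.support, (xiDeg d : ℤ) = m

/-- The set of spanning momentum functions of the projective `sl_{n+1}(ℝ)`-action. -/
noncomputable def momSet (n : ℕ) : Set (PolA n) :=
  (Set.range fun i : Fin n => (X (Sum.inr i) : PolA n)) ∪
  (Set.range fun ij : Fin n × Fin n =>
    (X (Sum.inl ij.1) * X (Sum.inr ij.2) : PolA n)) ∪
  (Set.range fun i : Fin n =>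
    (X (Sum.inl i) * ∑ k : Fin n, X (Sum.inl k) * X (Sum.inr k) : PolA n))

/-- The span `M` of the momentum functions. -/
noncomputable def momSpan (n : ℕ) : Submodule ℂ (PolA n) := Submodule.span ℂ (momSet n)

/-- The Weyl algebra `W` of differential operators with polynomial coefficients,
as a subalgebra of `End_ℂ(A)`. -/
noncomputable def Weyl (n : ℕ) : Subalgebra ℂ (Module.End ℂ (PolA n)) :=
  Algebra.adjoin ℂ
    ((Set.range fun i : Fin n =>
        (LinearMap.mulLeft ℂ (X (Sum.inl i)) : Module.End ℂ (PolA n))) ∪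
     (Set.range fun i : Fin n =>
        (LinearMap.mulLeft ℂ (X (Sum.inr i)) : Module.End ℂ (PolA n))) ∪
     (Set.range fun v : Fin n ⊕ Fin n =>
        ((pderiv v).toLinearMap : Module.End ℂ (PolA n))))

/-- A bilinear map `B : A × A → A` is bidifferential if it is a finite sum
`B(φ,ψ) = Σ_α A_α(φ)·B_α(ψ)` with `A_α, B_α` in the Weyl algebra. -/
def Bidiff (n : ℕ) (B : PolA n → PolA n → PolA n) : Prop :=
  ∃ (N : ℕ) (Aop Bop : Fin N → Weyl n),
    ∀ φ ψ : PolA n,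
      B φ ψ = ∑ α : Fin N,
        (Aop α : Module.End ℂ (PolA n)) φ * (Bop α : Module.End ℂ (PolA n)) ψ

/-- The scalar by which `T_p = ∏_{i=1}^{⌊p/2⌋}(E'+i)` acts on `A^m`. -/
noncomputable def TScal (n p m : ℕ) : ℂ :=
  ∏ i ∈ Finset.Icc 1 (p / 2), ((m : ℂ) + (n : ℂ) / 2 + (i : ℂ))

/-- The scalar by which `S_p = ∏_{i=1}^{⌊p/2⌋}(E'−i)` acts on `A^m`. -/
noncomputable def SScal (n p m : ℕ) : ℂ :=
  ∏ i ∈ Finset.Icc 1 (p / 2), ((m : ℂ) + (n : ℂ) / 2 - (i : ℂ))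

/-- The operator `T_p`. -/
noncomputable def Tp (n p : ℕ) : PolA n → PolA n := cE (TScal n p)

/-- The operator `S_p`. -/
noncomputable def Sp (n p : ℕ) : PolA n → PolA n := cE (SScal n p)

/-- The fiberwise Euler operator `E = Σ ξᵢ ∂/∂ξᵢ` as an endomorphism. -/
noncomputable def Elin (n : ℕ) : Module.End ℂ (PolA n) :=
  ∑ i : Fin n,
    (LinearMap.mulLeft ℂ (X (Sum.inr i)) : Module.End ℂ (PolA n)) ∘ₗ
      (pderiv (Sum.inr i)).toLinearMap

/-- `E' = E + n/2` as an endomorphism. -/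
noncomputable def E'lin (n : ℕ) : Module.End ℂ (PolA n) :=
  Elin n + ((n : ℂ) / 2) • 1

/-- `D` as an endomorphism. -/
noncomputable def Dlin (n : ℕ) : Module.End ℂ (PolA n) :=
  ∑ i : Fin n,
    ((pderiv (Sum.inl i)).toLinearMap : Module.End ℂ (PolA n)) ∘ₗ
      (pderiv (Sum.inr i)).toLinearMap

/-- `L^{(m)} = −(1/16)(ξ_m∘D − 2E'∘∂/∂u_m)∘D`. -/
noncomputable def Lop (n : ℕ) (m : Fin n) : Module.End ℂ (PolA n) :=
  (-(1 / 16 : ℂ)) •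
    (((LinearMap.mulLeft ℂ (X (Sum.inr m)) : Module.End ℂ (PolA n)) ∘ₗ Dlin n
        - (2 : ℂ) • (E'lin n ∘ₗ (pderiv (Sum.inl m)).toLinearMap)) ∘ₗ Dlin n)

end LO

/-! The operator `D` lowers the ξ-degree by one, `ξ_m` raises it by one and `∂/∂u_m` preserves it,
so functions of `E` can be moved past these operators at the cost of shifting their argument;
moreover `[D, ξ_m] = ∂/∂u_m` commutes with `D`. As `D ξ_m = 0` and `∂ξ_m/∂u_i = 0`, only the terms
`bg_r(bh_i(ψ) ξ_m)` with `i + r = p` survive in `C_p(ψ, ξ_m)`. Collecting the functions of `E` turns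
each of them into a combination of `ξ_m D^p ψ` and `∂(D^{p-1} ψ)/∂u_m`. For `λ = 1/2` the
numerators `k + j + (n + 1)/2` cancel against denominators, and for `p = 2` the remaining partial
fractions add up to the two stated ones. -/

open Finset.HasAntidiagonal (antidiagonal mem_antidiagonal)

theorem pderiv_pderiv_comm {σ R : Type*} [CommSemiring R] (i j : σ) (φ : MvPolynomial σ R) :
    pderiv i (pderiv j φ) = pderiv j (pderiv i φ) := by
  rcases eq_or_ne i j with rfl | hij
  · rfl
  · ext d
    simp [coeff_pderiv, add_right_comm d, hij, hij.symm, mul_right_comm]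

theorem sum_range_sum_range_ite_add_eq {M : Type*} [AddCommMonoid M] (p : ℕ) (f : ℕ → ℕ → M) :
    (∑ i ∈ Finset.range (p + 1), ∑ j ∈ Finset.range (p + 1), if i + j = p then f i j else 0) =
      ∑ x ∈ antidiagonal p, f x.1 x.2 := by
  rw [← Finset.sum_product', ← Finset.sum_filter]
  refine Finset.sum_congr ?_ fun _ _ => rfl
  ext x
  simp only [Finset.mem_filter, Finset.mem_product, Finset.mem_range, mem_antidiagonal]
  omega

namespace LO

variable {n : ℕ}

section EulerCalculus

theorem xiDeg_add (d e : (Fin n ⊕ Fin n) →₀ ℕ) : xiDeg (d + e) = xiDeg d + xiDeg e := by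
  simp [xiDeg, Finset.sum_add_distrib]

theorem xiDeg_single_inl (i : Fin n) (a : ℕ) : xiDeg (Finsupp.single (Sum.inl i) a) = 0 := by
  simp [xiDeg]

theorem xiDeg_single_inr (i : Fin n) (a : ℕ) : xiDeg (Finsupp.single (Sum.inr i) a) = a := by
  simp [xiDeg, Finsupp.single_apply]

theorem coeff_cE (c : ℕ → ℂ) (φ : PolA n) (d : (Fin n ⊕ Fin n) →₀ ℕ) :
    coeff d (cE c φ) = c (xiDeg d) * coeff d φ := by
  simp +contextual [cE, coeff_sum, coeff_monomial]

/-- The functional calculus `c ↦ c(E)` of the Euler operator `E`: an algebra homomorphism from the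
functions on the spectrum `ℕ` of `E` to the linear endomorphisms of `A`, bundling `cE`. -/
noncomputable def eulerCalculus (n : ℕ) : (ℕ → ℂ) →ₐ[ℂ] Module.End ℂ (PolA n) :=
  AlgHom.ofLinearMap
    { toFun c :=
        { toFun := cE c
          map_add' φ χ := by ext; simp [coeff_cE, mul_add]
          map_smul' a φ := by ext; simp [coeff_cE, mul_left_comm] }
      map_add' c c' := by ext1 φ; ext; simp [coeff_cE, add_mul]
      map_smul' a c := by ext1 φ; ext; simp [coeff_cE, mul_assoc] }
    (by ext1 φ; ext; simp [coeff_cE])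
    (fun c c' => by ext1 φ; ext; simp [coeff_cE, mul_assoc])

theorem eulerCalculus_apply (c : ℕ → ℂ) (φ : PolA n) : eulerCalculus n c φ = cE c φ := rfl

theorem coeff_eulerCalculus (c : ℕ → ℂ) (φ : PolA n) (d : (Fin n ⊕ Fin n) →₀ ℕ) :
    coeff d (eulerCalculus n c φ) = c (xiDeg d) * coeff d φ :=
  coeff_cE c φ d

theorem eulerCalculus_eulerCalculus (c c' : ℕ → ℂ) (φ : PolA n) :
    eulerCalculus n c (eulerCalculus n c' φ) = eulerCalculus n (c * c') φ := by
  rw [map_mul, Module.End.mul_apply]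

theorem pderiv_inl_eulerCalculus (m : Fin n) (c : ℕ → ℂ) (φ : PolA n) :
    pderiv (Sum.inl m) (eulerCalculus n c φ) = eulerCalculus n c (pderiv (Sum.inl m) φ) := by
  ext d
  simp [coeff_eulerCalculus, coeff_pderiv, xiDeg_add, xiDeg_single_inl, mul_assoc]

theorem pderiv_inr_eulerCalculus (m : Fin n) (c : ℕ → ℂ) (φ : PolA n) :
    pderiv (Sum.inr m) (eulerCalculus n c φ) =
      eulerCalculus n (fun k => c (k + 1)) (pderiv (Sum.inr m) φ) := by
  ext d
  simp [coeff_eulerCalculus, coeff_pderiv, xiDeg_add, xiDeg_single_inr, mul_assoc]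

theorem eulerCalculus_X_inr_mul (m : Fin n) (c : ℕ → ℂ) (φ : PolA n) :
    eulerCalculus n c (X (Sum.inr m) * φ) =
      X (Sum.inr m) * eulerCalculus n (fun k => c (k + 1)) φ := by
  classical
  ext d
  simp only [coeff_eulerCalculus, coeff_X_mul']
  split_ifs with hd
  · have single_le : Finsupp.single (Sum.inr m) 1 ≤ d :=
      Finsupp.single_le_iff.mpr (Nat.one_le_iff_ne_zero.mpr (Finsupp.mem_support_iff.mp hd))
    obtain ⟨e, rfl⟩ := exists_add_of_le single_le
    simp [xiDeg_add, xiDeg_single_inr, add_comm 1]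
  · exact mul_zero _

end EulerCalculus

section Divergence

theorem coe_Dlin : ⇑(Dlin n) = Dop := by
  ext1 φ
  simp [Dlin, Dop]

theorem Dlin_eulerCalculus (c : ℕ → ℂ) (φ : PolA n) :
    Dlin n (eulerCalculus n c φ) = eulerCalculus n (fun k => c (k + 1)) (Dlin n φ) := by
  simp only [coe_Dlin, Dop, pderiv_inr_eulerCalculus, pderiv_inl_eulerCalculus, map_sum]

theorem Dlin_iterate_eulerCalculus (r : ℕ) (c : ℕ → ℂ) (φ : PolA n) :
    (Dlin n)^[r] (eulerCalculus n c φ) =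
      eulerCalculus n (fun k => c (k + r)) ((Dlin n)^[r] φ) := by
  induction r with
  | zero => rfl
  | succ r ih =>
    simp only [Function.iterate_succ_apply', ih, Dlin_eulerCalculus, add_assoc, add_comm 1]

theorem Dlin_pderiv_inl (m : Fin n) (φ : PolA n) :
    Dlin n (pderiv (Sum.inl m) φ) = pderiv (Sum.inl m) (Dlin n φ) := by
  simp only [coe_Dlin, Dop, map_sum, pderiv_pderiv_comm _ (Sum.inl m)]

theorem Dlin_mul (φ χ : PolA n) :
    Dlin n (φ * χ) = Dlin n φ * χ + φ * Dlin n χ + ∑ i : Fin n,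
      (pderiv (Sum.inr i) φ * pderiv (Sum.inl i) χ +
        pderiv (Sum.inl i) φ * pderiv (Sum.inr i) χ) := by
  simp only [coe_Dlin, Dop, pderiv_mul, map_add, Finset.sum_mul, Finset.mul_sum,
    ← Finset.sum_add_distrib]
  exact Finset.sum_congr rfl fun i _ => by ring

theorem Dlin_eq_zero_of_pderiv_inl_eq_zero {χ : PolA n} (hχ : ∀ i, pderiv (Sum.inl i) χ = 0) :
    Dlin n χ = 0 := by
  simp [coe_Dlin, Dop, pderiv_pderiv_comm (Sum.inl _), hχ]

theorem pderiv_inl_X_inr (i m : Fin n) : pderiv (Sum.inl i) (X (Sum.inr m) : PolA n) = 0 :=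
  pderiv_X_of_ne Sum.inr_ne_inl

theorem Dlin_X_inr_mul (m : Fin n) (φ : PolA n) :
    Dlin n (X (Sum.inr m) * φ) = X (Sum.inr m) * Dlin n φ + pderiv (Sum.inl m) φ := by
  classical
  simp [Dlin_mul, Dlin_eq_zero_of_pderiv_inl_eq_zero (pderiv_inl_X_inr · m), pderiv_X,
    Pi.single_apply]

theorem Dlin_iterate_succ_X_inr_mul (r : ℕ) (m : Fin n) (φ : PolA n) :
    (Dlin n)^[r + 1] (X (Sum.inr m) * φ) =
      X (Sum.inr m) * (Dlin n)^[r + 1] φ +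
        ((r : ℂ) + 1) • pderiv (Sum.inl m) ((Dlin n)^[r] φ) := by
  induction r with
  | zero => simp [Dlin_X_inr_mul]
  | succ r ih =>
    rw [Function.iterate_succ_apply', ih, map_add, map_smul, Dlin_X_inr_mul, Dlin_pderiv_inl,
      ← Function.iterate_succ_apply' (Dlin n), ← Function.iterate_succ_apply' (Dlin n)]
    push_cast
    module

end Divergence

section StarProduct

theorem bh_eq (lam : ℂ) (d : ℕ) (φ : PolA n) :
    bh lam d φ = eulerCalculus n (hScal n lam d) ((Dlin n)^[d] φ) := by
  rw [coe_Dlin, eulerCalculus_apply, bh]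

theorem bg_eq (lam : ℂ) (d : ℕ) (φ : PolA n) :
    bg lam d φ = eulerCalculus n (gScal n lam d) ((Dlin n)^[d] φ) := by
  rw [coe_Dlin, eulerCalculus_apply, bg]

theorem hScal_zero (n : ℕ) (lam : ℂ) : hScal n lam 0 = 1 := by
  ext; simp [hScal]

theorem gScal_zero (n : ℕ) (lam : ℂ) : gScal n lam 0 = 1 := by
  ext; simp [gScal]

theorem bh_zero (lam : ℂ) (φ : PolA n) : bh lam 0 φ = φ := by
  simp [bh_eq, hScal_zero]

theorem bg_zero (lam : ℂ) (φ : PolA n) : bg lam 0 φ = φ := by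
  simp [bg_eq, gScal_zero]

theorem bh_eq_zero_of_Dlin_eq_zero {d : ℕ} (hd : d ≠ 0) (lam : ℂ) {φ : PolA n}
    (hφ : Dlin n φ = 0) : bh lam d φ = 0 := by
  obtain ⟨d, rfl⟩ := Nat.exists_eq_succ_of_ne_zero hd
  rw [bh_eq, Function.iterate_succ_apply, hφ, iterate_map_zero, map_zero]

theorem bg_apply_zero (lam : ℂ) (d : ℕ) : bg lam d (0 : PolA n) = 0 := by
  rw [bg_eq, iterate_map_zero, map_zero]

theorem Nop_zero (φ χ : PolA n) : Nop 0 φ χ = φ * χ := by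
  simp [Nop]

theorem foldr_pderiv_inl_zero (l : List (Fin n)) :
    l.foldr (fun i χ => pderiv (Sum.inl i) χ) (0 : PolA n) = 0 :=
  List.foldr_fixed' (fun _ => map_zero _) l

theorem Nop_apply_zero (k : ℕ) (φ : PolA n) : Nop k φ 0 = 0 := by
  simp [Nop, foldr_pderiv_inl_zero]

theorem Nop_eq_zero_of_pderiv_inl_eq_zero {k : ℕ} (hk : k ≠ 0) (φ : PolA n) {χ : PolA n}
    (hχ : ∀ i, pderiv (Sum.inl i) χ = 0) : Nop k φ χ = 0 := by
  obtain ⟨k, rfl⟩ := Nat.exists_eq_succ_of_ne_zero hk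
  simp [Nop, List.ofFn_succ', -List.ofFn_succ, hχ, foldr_pderiv_inl_zero]

theorem C_eq_sum_antidiagonal {χ : PolA n} (hχ : ∀ i, pderiv (Sum.inl i) χ = 0) (lam : ℂ) (p : ℕ)
    (ψ : PolA n) :
    C n lam p ψ χ = ∑ x ∈ antidiagonal p, bg lam x.2 (bh lam x.1 ψ * χ) := by
  rw [← sum_range_sum_range_ite_add_eq p fun i r => bg lam r (bh lam i ψ * χ), C]
  refine Finset.sum_congr rfl fun i _ => ?_
  rw [Finset.sum_eq_single_of_mem 0 (by simp), Finset.sum_eq_single_of_mem 0 (by simp)]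
  · simp only [bh_zero, Nop_zero, add_zero]
  · intro k _ hk
    simp [bh_zero, Nop_eq_zero_of_pderiv_inl_eq_zero hk _ hχ, bg_apply_zero]
  · intro j _ hj
    simp [bh_eq_zero_of_Dlin_eq_zero hj lam (Dlin_eq_zero_of_pderiv_inl_eq_zero hχ),
      Nop_apply_zero, bg_apply_zero]

theorem bg_succ_bh_mul_X_inr (lam : ℂ) (i r : ℕ) (m : Fin n) (ψ : PolA n) :
    bg lam (r + 1) (bh lam i ψ * X (Sum.inr m)) =
      X (Sum.inr m) * eulerCalculus n
          (fun k => gScal n lam (r + 1) (k + 1) * hScal n lam i (k + (r + 1)))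
          ((Dlin n)^[i + r + 1] ψ) +
        eulerCalculus n (fun k => (r + 1) * (gScal n lam (r + 1) k * hScal n lam i (k + r)))
          (pderiv (Sum.inl m) ((Dlin n)^[i + r] ψ)) := by
  have iterate_add (s : ℕ) : (Dlin n)^[s] ((Dlin n)^[i] ψ) = (Dlin n)^[i + s] ψ := by
    rw [← Function.iterate_add_apply, add_comm]
  rw [bg_eq, bh_eq, mul_comm, Dlin_iterate_succ_X_inr_mul, Dlin_iterate_eulerCalculus,
    Dlin_iterate_eulerCalculus, pderiv_inl_eulerCalculus, iterate_add, iterate_add, map_add,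
    map_smul, eulerCalculus_X_inr_mul, eulerCalculus_eulerCalculus, eulerCalculus_eulerCalculus,
    ← LinearMap.smul_apply, ← map_smul]
  rfl

/-- The function of `E` applied to `D^p ψ` in `C_p(ψ, ξ_m)`, before multiplication by `ξ_m`; it is
evaluated at the ξ-degree of `D^p ψ`, hence the shift in `gScal`. -/
noncomputable def xiCoeff (n : ℕ) (lam : ℂ) (p k : ℕ) : ℂ :=
  ∑ x ∈ antidiagonal p, gScal n lam x.2 (k + 1) * hScal n lam x.1 (k + x.2)

/-- The function of `E` applied to `∂(D^p ψ)/∂u_m` in `C_{p+1}(ψ, ξ_m)`. The summation index is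
`(i, r - 1)` where `i + r = p + 1`, since the terms with `r = 0` do not contribute. -/
noncomputable def uDerivCoeff (n : ℕ) (lam : ℂ) (p k : ℕ) : ℂ :=
  ∑ x ∈ antidiagonal p, (x.2 + 1) * (gScal n lam (x.2 + 1) k * hScal n lam x.1 (k + x.2))

theorem C_succ_X_inr (lam : ℂ) (p : ℕ) (m : Fin n) (ψ : PolA n) :
    C n lam (p + 1) ψ (X (Sum.inr m)) =
      X (Sum.inr m) * cE (xiCoeff n lam (p + 1)) (Dop^[p + 1] ψ) +
        cE (uDerivCoeff n lam p) (pderiv (Sum.inl m) (Dop^[p] ψ)) := by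
  simp only [← eulerCalculus_apply, ← coe_Dlin]
  have xiCoeff_eq : xiCoeff n lam (p + 1) = hScal n lam (p + 1) + ∑ x ∈ antidiagonal p,
      fun k => gScal n lam (x.2 + 1) (k + 1) * hScal n lam x.1 (k + (x.2 + 1)) := by
    ext k
    simp [xiCoeff, Finset.Nat.sum_antidiagonal_succ', gScal_zero]
  have uDerivCoeff_eq : uDerivCoeff n lam p = ∑ x ∈ antidiagonal p,
      fun k => (x.2 + 1) * (gScal n lam (x.2 + 1) k * hScal n lam x.1 (k + x.2)) := by
    ext k
    simp [uDerivCoeff]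
  rw [C_eq_sum_antidiagonal (pderiv_inl_X_inr · m), Finset.Nat.sum_antidiagonal_succ', bg_zero,
    bh_eq, mul_comm, xiCoeff_eq, uDerivCoeff_eq, map_add, LinearMap.add_apply, mul_add, add_assoc]
  congr 1
  simp only [map_sum, LinearMap.sum_apply, Finset.mul_sum, ← Finset.sum_add_distrib]
  refine Finset.sum_congr rfl fun x hx => ?_
  rw [bg_succ_bh_mul_X_inr, mem_antidiagonal.mp hx]

end StarProduct

section HalfDensities

theorem hScal_half_one (n k : ℕ) : hScal n (1 / 2) 1 k = 1 / 2 := by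
  have denom_ne_zero : 2 * (k : ℂ) + n + 1 ≠ 0 := mod_cast (2 * k + n).succ_ne_zero
  have numer_eq : (k : ℂ) + 1 / 2 * (n + 1) = 1 / 2 * (2 * k + n + 1) := by ring
  simp only [hScal, Finset.prod_range_one, Nat.factorial_one, Nat.cast_one, Nat.cast_zero, add_zero,
    inv_one, one_mul]
  rw [numer_eq, mul_div_cancel_right₀ _ denom_ne_zero]

theorem gScal_half_one (n k : ℕ) : gScal n (1 / 2) 1 k = -(1 / 2) := by
  have denom_ne_zero : 2 * (k : ℂ) + n + 1 ≠ 0 := mod_cast (2 * k + n).succ_ne_zero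
  have numer_eq : -(k : ℂ) - 1 / 2 * (n + 1) = -(1 / 2) * (2 * k + n + 1) := by ring
  simp only [gScal, Finset.prod_range_one, Nat.factorial_one, Nat.cast_one, Nat.cast_zero, add_zero,
    sub_zero, inv_one, one_mul]
  rw [numer_eq, mul_div_cancel_right₀ _ denom_ne_zero]

theorem hScal_half_two (n k : ℕ) :
    hScal n (1 / 2) 2 k = 1 / 8 - 1 / 16 * ((k : ℂ) + n / 2 + 1)⁻¹ := by
  have denom_two_ne_zero : 2 * (k : ℂ) + n + 2 ≠ 0 := mod_cast (2 * k + n + 1).succ_ne_zero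
  have denom_three_ne_zero : 2 * (k : ℂ) + n + 3 ≠ 0 := mod_cast (2 * k + n + 2).succ_ne_zero
  have shift_eq : 2 * (k : ℂ) + 1 + n + 2 = 2 * k + n + 3 := by ring
  have half_eq : (k : ℂ) + n / 2 + 1 = (2 * k + n + 2) / 2 := by ring
  simp only [hScal, Finset.prod_range_succ, Finset.prod_range_zero, Nat.factorial_two,
    Nat.cast_one, Nat.cast_zero, Nat.cast_ofNat, add_zero, shift_eq, half_eq]
  field_simp
  ring

theorem gScal_half_two (n k : ℕ) :
    gScal n (1 / 2) 2 k = 1 / 8 + 1 / 16 * ((k : ℂ) + n / 2 + 1)⁻¹ := by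
  have denom_one_ne_zero : 2 * (k : ℂ) + n + 1 ≠ 0 := mod_cast (2 * k + n).succ_ne_zero
  have denom_two_ne_zero : 2 * (k : ℂ) + n + 2 ≠ 0 := mod_cast (2 * k + n + 1).succ_ne_zero
  have shift_eq : 2 * (k : ℂ) + 1 + n + 1 = 2 * k + n + 2 := by ring
  have half_eq : (k : ℂ) + n / 2 + 1 = (2 * k + n + 2) / 2 := by ring
  simp only [gScal, Finset.prod_range_succ, Finset.prod_range_zero, Nat.factorial_two,
    Nat.cast_one, Nat.cast_zero, Nat.cast_ofNat, add_zero, sub_zero, shift_eq, half_eq]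
  field_simp
  ring

theorem xiCoeff_half_two (n k : ℕ) :
    xiCoeff n (1 / 2) 2 k =
      -(1 / 16) * ((((k + 1 : ℕ) : ℂ) + n / 2) * (((k + 1 : ℕ) : ℂ) + n / 2 + 1))⁻¹ := by
  have denom_two_ne_zero : 2 * (k : ℂ) + n + 2 ≠ 0 := mod_cast (2 * k + n + 1).succ_ne_zero
  have denom_four_ne_zero : 2 * (k : ℂ) + n + 4 ≠ 0 := mod_cast (2 * k + n + 3).succ_ne_zero
  have half_eq : (k : ℂ) + 1 + n / 2 = (2 * k + n + 2) / 2 := by ring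
  have half_succ_eq : (k : ℂ) + 1 + n / 2 + 1 = (2 * k + n + 4) / 2 := by ring
  have sum_eq : xiCoeff n (1 / 2) 2 k =
      1 / 8 - 1 / 16 * ((k : ℂ) + 1 + n / 2)⁻¹ - 1 / 4 +
        (1 / 8 + 1 / 16 * ((k : ℂ) + 1 + n / 2 + 1)⁻¹) := by
    simp only [xiCoeff, Finset.Nat.sum_antidiagonal_succ', Finset.Nat.antidiagonal_zero,
      Finset.sum_singleton, zero_add, Nat.reduceAdd, hScal_zero, gScal_zero, hScal_half_one,
      gScal_half_one, hScal_half_two, gScal_half_two, Pi.one_apply]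
    push_cast
    ring
  rw [sum_eq, Nat.cast_succ, half_succ_eq, half_eq]
  field_simp
  ring

theorem uDerivCoeff_half_one (n k : ℕ) :
    uDerivCoeff n (1 / 2) 1 k = 1 / 8 * ((k : ℂ) + n / 2 + 1)⁻¹ := by
  have sum_eq : uDerivCoeff n (1 / 2) 1 k =
      -(1 / 4) + 2 * (1 / 8 + 1 / 16 * ((k : ℂ) + n / 2 + 1)⁻¹) := by
    simp only [uDerivCoeff, Finset.Nat.sum_antidiagonal_succ', Finset.Nat.antidiagonal_zero,
      Finset.sum_singleton, zero_add, Nat.reduceAdd, hScal_zero, hScal_half_one, gScal_half_one,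
      gScal_half_two, Pi.one_apply]
    push_cast
    ring
  rw [sum_eq]
  ring

end HalfDensities

end LO

/-- the formula
`C^{1/2}_2(ψ, ξ_m) = −(1/16)(E'(E'+1))⁻¹(ξ_m D²ψ) + (1/8)(E'+1)⁻¹(∂(Dψ)/∂u_m)`. -/
theorem stmt_14 (n : ℕ) (hn : 1 ≤ n) (m : Fin n) (ψ : PolA n) :
    LO.C n (1 / 2) 2 ψ (X (Sum.inr m)) =
      (-(1 / 16 : ℂ)) •
          LO.cE (fun k => (((k : ℂ) + (n : ℂ) / 2) * ((k : ℂ) + (n : ℂ) / 2 + 1))⁻¹)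
            (X (Sum.inr m) * LO.Dop (LO.Dop ψ)) +
      (1 / 8 : ℂ) •
          LO.cE (fun k => ((k : ℂ) + (n : ℂ) / 2 + 1)⁻¹)
            (pderiv (Sum.inl m) (LO.Dop ψ)) := by
  have xi_term : LO.xiCoeff n (1 / 2) 2 = (-(1 / 16 : ℂ)) • fun k : ℕ =>
      ((((k + 1 : ℕ) : ℂ) + n / 2) * (((k + 1 : ℕ) : ℂ) + n / 2 + 1))⁻¹ :=
    funext (LO.xiCoeff_half_two n)
  have u_term : LO.uDerivCoeff n (1 / 2) 1 = (1 / 8 : ℂ) • fun k : ℕ =>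
      ((k : ℂ) + n / 2 + 1)⁻¹ :=
    funext (LO.uDerivCoeff_half_one n)
  rw [LO.C_succ_X_inr, xi_term, u_term]
  simp only [← LO.eulerCalculus_apply, map_smul, LinearMap.smul_apply, mul_smul_comm,
    LO.eulerCalculus_X_inr_mul, Function.iterate_succ_apply, Function.iterate_zero_apply]
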